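/- Let k be a positive integer, let G be a finite simple graph, let I ⊆ V(G), let P be an I-connected path decomposition of G of width at most k−1, and let S and S' be bottlenecks of G with S ⊊ S'. If P is S'-structured, then either I(S,P) ∩ I(S',P) = ∅ or I(S',P) ⊆ I(S,P). -/

import Mathlib

open SimpleGraph

variable {V : Type*}

/-- `N_G(Y)`: the set of vertices outside `Y` having a neighbor in `Y`. -/
def nbhdSet (G : SimpleGraph V) (Y : Set V) : Set V :=
  {v | v ∉ Y ∧ ∃ u ∈ Y, G.Adj u v}

/-- `C` is a connected component of the subgraph of `G` induced by `U`. -/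
def IsCompIn (G : SimpleGraph V) (U C : Set V) : Prop :=
  C.Nonempty ∧ C ⊆ U ∧ (G.induce C).Connected ∧
    ∀ u ∈ C, ∀ v ∈ U, G.Adj u v → v ∈ C

/-- `C` is a connected component of `G - S`. -/
def IsCompOf (G : SimpleGraph V) (S C : Set V) : Prop :=
  IsCompIn G Sᶜ C

/-- `C` is an `S`-branch: a connected component of `G - S` with `N_G(C) = S`. -/
def IsBranch (G : SimpleGraph V) (S C : Set V) : Prop :=
  IsCompOf G S C ∧ nbhdSet G C = S

/-- `S` is a bottleneck (for the width parameter `k`): a nonempty set with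
at least `2k+1` `S`-branches. -/
def IsBottleneck (G : SimpleGraph V) (k : ℕ) (S : Set V) : Prop :=
  S.Nonempty ∧ 2 * k + 1 ≤ {C : Set V | IsBranch G S C}.ncard

/-- `(X 0, …, X (l-1))` is a path decomposition of `G`. -/
def IsPathDecomp (G : SimpleGraph V) (l : ℕ) (X : ℕ → Set V) : Prop :=
  (∀ v, ∃ i < l, v ∈ X i) ∧
  (∀ u v, G.Adj u v → ∃ i < l, u ∈ X i ∧ v ∈ X i) ∧
  (∀ i j m, i ≤ j → j ≤ m → m < l → X i ∩ X m ⊆ X j)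

/-- The width of a path decomposition: the maximum bag size minus one. -/
noncomputable def pdWidth (l : ℕ) (X : ℕ → Set V) : ℕ :=
  ((Finset.range l).sup fun i => (X i).ncard) - 1

/-- The set of indices of bags meeting the vertex set `C`. -/
def supp (l : ℕ) (X : ℕ → Set V) (C : Set V) : Set ℕ :=
  {t | t < l ∧ (C ∩ X t).Nonempty}

/-- `a(C)`: the first index of a bag meeting `C`. -/
noncomputable def firstIdx (l : ℕ) (X : ℕ → Set V) (C : Set V) : ℕ :=
  sInf (supp l X C)

/-- `b(C)`: the last index of a bag meeting `C`. -/
noncomputable def lastIdx (l : ℕ) (X : ℕ → Set V) (C : Set V) : ℕ :=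
  sSup (supp l X C)

/-- `C` is an in-branch of `S` with respect to the decomposition:
an `S`-branch with `S ⊆ X (a C)` and `S ⊆ X (b C)`. -/
def IsInBranch (G : SimpleGraph V) (l : ℕ) (X : ℕ → Set V) (S C : Set V) : Prop :=
  IsBranch G S C ∧ S ⊆ X (firstIdx l X C) ∧ S ⊆ X (lastIdx l X C)

/-- `α(S)`: the minimum of `a(H)` over in-branches `H` of `S`. -/
noncomputable def botStart (G : SimpleGraph V) (l : ℕ) (X : ℕ → Set V) (S : Set V) : ℕ :=
  sInf {i | ∃ C, IsInBranch G l X S C ∧ i = firstIdx l X C}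

/-- `β(S)`: the maximum of `b(H)` over in-branches `H` of `S`. -/
noncomputable def botEnd (G : SimpleGraph V) (l : ℕ) (X : ℕ → Set V) (S : Set V) : ℕ :=
  sSup {i | ∃ C, IsInBranch G l X S C ∧ i = lastIdx l X C}

/-- The interval `I(S,P) = [α(S), β(S)]` of a bottleneck `S`. -/
noncomputable def botInterval (G : SimpleGraph V) (l : ℕ) (X : ℕ → Set V) (S : Set V) : Set ℕ :=
  Set.Icc (botStart G l X S) (botEnd G l X S)

/-- A pre-branch of `S`. -/
def IsPreBranch (G : SimpleGraph V) (l : ℕ) (X : ℕ → Set V) (S C : Set V) : Prop :=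
  IsBranch G S C ∧ ¬ IsInBranch G l X S C ∧ firstIdx l X C < botStart G l X S

/-- A post-branch of `S`. -/
def IsPostBranch (G : SimpleGraph V) (l : ℕ) (X : ℕ → Set V) (S C : Set V) : Prop :=
  IsBranch G S C ∧ ¬ IsInBranch G l X S C ∧
    botStart G l X S ≤ firstIdx l X C ∧ botEnd G l X S < lastIdx l X C

/-- `C` waits in the interval `[i, j]` of the decomposition. -/
def WaitsIn (X : ℕ → Set V) (C : Set V) (i j : ℕ) : Prop :=
  ∀ t, i ≤ t → t ≤ j → C ∩ X t = C ∩ X i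

/-- The decomposition is `S`-structured: every component of `G - S` that is not an
`S`-branch, and every pre- or post-branch of `S`, waits in `I(S,P)`. -/
def IsStructured (G : SimpleGraph V) (l : ℕ) (X : ℕ → Set V) (S : Set V) : Prop :=
  ∀ C : Set V,
    ((IsCompOf G S C ∧ ¬ IsBranch G S C) ∨ IsPreBranch G l X S C ∨ IsPostBranch G l X S C) →
    WaitsIn X C (botStart G l X S) (botEnd G l X S)

/-- The decomposition is `I`-connected: every connected component of the subgraph
induced by any prefix of bags contains a vertex of `I`. -/
def IsIConn (G : SimpleGraph V) (l : ℕ) (X : ℕ → Set V) (I : Set V) : Prop :=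
  ∀ i < l, ∀ C : Set V, IsCompIn G {v | ∃ j ≤ i, v ∈ X j} C → (C ∩ I).Nonempty

/-!
Both bottlenecks have an in-branch. Indeed, let `a` be the last index at which a vertex of `S`
first appears and `b` the first index at which one last appears. The bags `X a` and `X b` have at
most `2k` vertices together, so some `S`-branch avoids both. It is connected and adjacent to every
vertex of `S`, so it lives inside the window `[a, b]`, throughout which the bags contain `S`.

Now distinguish two cases.

* Some in-branch `H` of `S` meets `S'`. Every `S'`-branch is connected, avoids `S` and has a
  neighbor in `H`, so it is contained in `H`. Hence `I(S',P) ⊆ [a(H), b(H)] ⊆ I(S,P)`.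
* No in-branch of `S` meets `S'`. Then each of them is a component of `G - S'` with neighborhood
  `S ≠ S'`, so it waits in `I(S',P)`: it neither appears nor disappears in there. Applied to the
  in-branches attaining the ends of `I(S,P)`, this gives the dichotomy.
-/

lemma exists_disjoint_of_ncard_lt {𝒞 : Set (Set V)} {Y : Set V} (h𝒞 : 𝒞.PairwiseDisjoint id)
    (hY : Y.Finite) (hlt : Y.ncard < 𝒞.ncard) : ∃ C ∈ 𝒞, Disjoint C Y := by
  by_contra! hmeet
  obtain ⟨C₀, hC₀⟩ := Set.nonempty_of_ncard_ne_zero (Nat.ne_zero_of_lt hlt)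
  obtain ⟨v, -⟩ := Set.not_disjoint_iff.1 (hmeet C₀ hC₀)
  have : Nonempty V := ⟨v⟩
  choose! f hfC hfY using fun C hC => Set.not_disjoint_iff.1 (hmeet C hC)
  have hinj : Set.InjOn f 𝒞 := fun C hC D hD hCD =>
    h𝒞.elim_set hC hD (f C) (hfC C hC) (hCD ▸ hfC D hD)
  exact hlt.not_ge (Set.ncard_le_ncard_of_injOn f hfY hinj hY)

section Components

variable {G : SimpleGraph V} {U W C D S S' : Set V} {u v : V}

lemma subset_of_connected_induce (hC : (G.induce C).Connected)
    (hclosed : ∀ u ∈ C, ∀ v ∈ C, G.Adj u v → u ∈ D → v ∈ D) (hCD : (C ∩ D).Nonempty) :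
    C ⊆ D := by
  obtain ⟨u, huC, huD⟩ := hCD
  intro v hvC
  by_contra hvD
  obtain ⟨p⟩ := hC.preconnected ⟨u, huC⟩ ⟨v, hvC⟩
  obtain ⟨d, -, hd₁, hd₂⟩ := p.exists_boundary_dart (Subtype.val ⁻¹' D) huD hvD
  exact hd₂ (hclosed _ d.fst.2 _ d.snd.2 d.adj hd₁)

namespace IsCompIn

lemma nonempty (hC : IsCompIn G U C) : C.Nonempty :=
  hC.1

lemma subset (hC : IsCompIn G U C) : C ⊆ U :=
  hC.2.1

lemma connected (hC : IsCompIn G U C) : (G.induce C).Connected :=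
  hC.2.2.1

lemma mem_of_adj (hC : IsCompIn G U C) (hu : u ∈ C) (hv : v ∈ U) (huv : G.Adj u v) : v ∈ C :=
  hC.2.2.2 u hu v hv huv

lemma subset_of_connected (hD : IsCompIn G U D) (hC : (G.induce C).Connected) (hCU : C ⊆ U)
    (hCD : (C ∩ D).Nonempty) : C ⊆ D :=
  subset_of_connected_induce hC (fun _ _ _ hv huv hu => hD.mem_of_adj hu (hCU hv) huv) hCD

lemma eq_of_inter_nonempty (hC : IsCompIn G U C) (hD : IsCompIn G U D)
    (hCD : (C ∩ D).Nonempty) : C = D :=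
  (hD.subset_of_connected hC.connected hC.subset hCD).antisymm
    (hC.subset_of_connected hD.connected hD.subset (Set.inter_comm C D ▸ hCD))

lemma of_subset (hC : IsCompIn G U C) (hCW : C ⊆ W) (hWU : W ⊆ U) : IsCompIn G W C :=
  ⟨hC.nonempty, hCW, hC.connected, fun _ hu _ hv => hC.mem_of_adj hu (hWU hv)⟩

end IsCompIn

lemma pairwiseDisjoint_setOf_isCompIn (G : SimpleGraph V) (U : Set V) :
    {C | IsCompIn G U C}.PairwiseDisjoint id := fun _ hC _ hD hne =>
  Set.disjoint_iff_inter_eq_empty.2 <| Set.not_nonempty_iff_eq_empty.1 fun hCD =>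
    hne (hC.eq_of_inter_nonempty hD hCD)

lemma pairwiseDisjoint_setOf_isBranch (G : SimpleGraph V) (S : Set V) :
    {C | IsBranch G S C}.PairwiseDisjoint id :=
  (pairwiseDisjoint_setOf_isCompIn G Sᶜ).subset fun _ hC => hC.1

lemma IsBranch.subset_isCompOf (hC : IsBranch G S' C) (hD : IsCompOf G S D) (hSS' : S ⊆ S')
    (hDS' : (D ∩ S').Nonempty) : C ⊆ D := by
  have hCS : C ⊆ Sᶜ := hC.1.subset.trans (Set.compl_subset_compl.2 hSS')
  obtain ⟨s, hsD, hsS'⟩ := hDS'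
  obtain ⟨-, u, huC, hus⟩ : s ∈ nbhdSet G C := hC.2.symm ▸ hsS'
  have huD : u ∈ D := hD.mem_of_adj hsD (hCS huC) hus.symm
  exact hD.subset_of_connected hC.1.connected hCS ⟨u, huC, huD⟩

end Components

section PathDecompositions

variable {G : SimpleGraph V} {l : ℕ} {X : ℕ → Set V} {C D S : Set V} {i j s t : ℕ} {v : V}

lemma ncard_bag_le_pdWidth_add_one (X : ℕ → Set V) (hi : i < l) :
    (X i).ncard ≤ pdWidth l X + 1 :=
  (Finset.le_sup (f := fun i => (X i).ncard) (Finset.mem_range.2 hi)).trans le_tsub_add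

lemma bddAbove_supp (l : ℕ) (X : ℕ → Set V) (C : Set V) : BddAbove (supp l X C) :=
  ⟨l, fun _ ht => ht.1.le⟩

lemma mem_supp_singleton : t ∈ supp l X {v} ↔ t < l ∧ v ∈ X t :=
  and_congr_right fun _ => Set.singleton_inter_nonempty

lemma supp_mono (hCD : C ⊆ D) : supp l X C ⊆ supp l X D :=
  fun _ ht => ⟨ht.1, ht.2.mono (Set.inter_subset_inter_left _ hCD)⟩

lemma firstIdx_le (ht : t ∈ supp l X C) : firstIdx l X C ≤ t :=
  Nat.sInf_le ht

lemma le_lastIdx (ht : t ∈ supp l X C) : t ≤ lastIdx l X C :=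
  le_csSup (bddAbove_supp l X C) ht

lemma firstIdx_mem_supp_of_nonempty (hne : (supp l X C).Nonempty) :
    firstIdx l X C ∈ supp l X C :=
  Nat.sInf_mem hne

lemma lastIdx_mem_supp_of_nonempty (hne : (supp l X C).Nonempty) :
    lastIdx l X C ∈ supp l X C :=
  Nat.sSup_mem hne (bddAbove_supp l X C)

namespace IsPathDecomp

lemma supp_nonempty (hP : IsPathDecomp G l X) (hC : C.Nonempty) : (supp l X C).Nonempty := by
  obtain ⟨v, hv⟩ := hC
  obtain ⟨i, hi, hvi⟩ := hP.1 v
  exact ⟨i, hi, v, hv, hvi⟩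

lemma firstIdx_mem_supp (hP : IsPathDecomp G l X) (hC : C.Nonempty) :
    firstIdx l X C ∈ supp l X C :=
  firstIdx_mem_supp_of_nonempty (hP.supp_nonempty hC)

lemma lastIdx_mem_supp (hP : IsPathDecomp G l X) (hC : C.Nonempty) :
    lastIdx l X C ∈ supp l X C :=
  lastIdx_mem_supp_of_nonempty (hP.supp_nonempty hC)

lemma ordConnected_supp (hP : IsPathDecomp G l X) (hC : (G.induce C).Connected) :
    (supp l X C).OrdConnected := by
  refine ⟨?_⟩
  rintro i ⟨-, u, huC, hui⟩ j ⟨hj, v, hvC, hvj⟩ t ⟨hit, htj⟩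
  by_contra ht
  have havoid : ∀ x ∈ C, x ∉ X t := fun x hx hxt => ht ⟨htj.trans_lt hj, x, hx, hxt⟩
  -- A vertex of `C` seen up to bag `t`, with a neighbor seen only later, lies in `X t` itself.
  have hseen : C ⊆ {x | ∃ m ≤ t, x ∈ X m} := by
    refine subset_of_connected_induce hC ?_ ⟨u, huC, i, hit, hui⟩
    rintro x hx y - hxy ⟨m, hmt, hxm⟩
    obtain ⟨n, hn, hxn, hyn⟩ := hP.2.1 x y hxy
    rcases le_total n t with hnt | htn
    · exact ⟨n, hnt, hyn⟩
    · exact absurd (hP.2.2 m t n hmt htn hn ⟨hxm, hxn⟩) (havoid x hx)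
  obtain ⟨m, hmt, hvm⟩ := hseen hvC
  exact havoid v hvC (hP.2.2 m t j hmt htj hj ⟨hvm, hvj⟩)

lemma mem_bag_of_mem_Icc (hP : IsPathDecomp G l X)
    (ht : t ∈ Set.Icc (firstIdx l X {v}) (lastIdx l X {v})) : v ∈ X t := by
  have hfirst := mem_supp_singleton.1 (hP.firstIdx_mem_supp (Set.singleton_nonempty v))
  have hlast := mem_supp_singleton.1 (hP.lastIdx_mem_supp (Set.singleton_nonempty v))
  exact hP.2.2 _ t _ ht.1 ht.2 hlast.1 ⟨hfirst.2, hlast.2⟩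

lemma exists_forall_mem_Icc_subset_bag (hP : IsPathDecomp G l X) (hfin : S.Finite)
    (hne : S.Nonempty) :
    ∃ u ∈ S, ∃ v ∈ S, ∀ t ∈ Set.Icc (firstIdx l X {u}) (lastIdx l X {v}), S ⊆ X t := by
  obtain ⟨u, hu, hmax⟩ := S.exists_max_image (fun s => firstIdx l X {s}) hfin hne
  obtain ⟨v, hv, hmin⟩ := S.exists_min_image (fun s => lastIdx l X {s}) hfin hne
  exact ⟨u, hu, v, hv, fun t ht s hs =>
    hP.mem_bag_of_mem_Icc ⟨(hmax s hs).trans ht.1, ht.2.trans (hmin s hs)⟩⟩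

lemma supp_inter_supp_singleton_nonempty (hP : IsPathDecomp G l X) (hv : v ∈ nbhdSet G C) :
    (supp l X C ∩ supp l X {v}).Nonempty := by
  obtain ⟨-, u, hu, huv⟩ := hv
  obtain ⟨m, hm, hum, hvm⟩ := hP.2.1 u v huv
  exact ⟨m, ⟨hm, u, hu, hum⟩, mem_supp_singleton.2 ⟨hm, hvm⟩⟩

lemma firstIdx_singleton_le_firstIdx (hP : IsPathDecomp G l X) (hC : (G.induce C).Connected)
    (hv : v ∈ nbhdSet G C) (hdisj : Disjoint C (X (firstIdx l X {v}))) :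
    firstIdx l X {v} ≤ firstIdx l X C := by
  obtain ⟨m, hmC, hmv⟩ := hP.supp_inter_supp_singleton_nonempty hv
  by_contra! hlt
  have hmem : firstIdx l X {v} ∈ supp l X C :=
    (hP.ordConnected_supp hC).out (firstIdx_mem_supp_of_nonempty ⟨m, hmC⟩) hmC
      ⟨hlt.le, firstIdx_le hmv⟩
  exact hmem.2.not_disjoint hdisj

lemma lastIdx_le_lastIdx_singleton (hP : IsPathDecomp G l X) (hC : (G.induce C).Connected)
    (hv : v ∈ nbhdSet G C) (hdisj : Disjoint C (X (lastIdx l X {v}))) :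
    lastIdx l X C ≤ lastIdx l X {v} := by
  obtain ⟨m, hmC, hmv⟩ := hP.supp_inter_supp_singleton_nonempty hv
  by_contra! hlt
  have hmem : lastIdx l X {v} ∈ supp l X C :=
    (hP.ordConnected_supp hC).out hmC (lastIdx_mem_supp_of_nonempty ⟨m, hmC⟩)
      ⟨le_lastIdx hmv, hlt.le⟩
  exact hmem.2.not_disjoint hdisj

end IsPathDecomp

namespace WaitsIn

lemma mem_supp (hC : WaitsIn X C i j) (hs : s ∈ Set.Icc i j) (ht : t ∈ Set.Icc i j) (htl : t < l)
    (hsC : s ∈ supp l X C) : t ∈ supp l X C :=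
  ⟨htl, ((hC t ht.1 ht.2).trans (hC s hs.1 hs.2).symm) ▸ hsC.2⟩

lemma firstIdx_le_or_lt (hC : WaitsIn X C i j) (hne : (supp l X C).Nonempty) :
    firstIdx l X C ≤ i ∨ j < firstIdx l X C := by
  by_contra! h
  have hfirst : firstIdx l X C ∈ supp l X C := firstIdx_mem_supp_of_nonempty hne
  have hi : i ∈ supp l X C := hC.mem_supp ⟨h.1.le, h.2⟩
    ⟨le_rfl, h.1.le.trans h.2⟩ (h.1.trans hfirst.1) hfirst
  exact h.1.not_ge (firstIdx_le hi)

lemma lastIdx_lt_or_le (hC : WaitsIn X C i j) (hj : j < l) (hne : (supp l X C).Nonempty) :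
    lastIdx l X C < i ∨ j ≤ lastIdx l X C := by
  by_contra! h
  have hlast : lastIdx l X C ∈ supp l X C := lastIdx_mem_supp_of_nonempty hne
  have hjC : j ∈ supp l X C := hC.mem_supp ⟨h.1, h.2.le⟩ ⟨h.1.trans h.2.le, le_rfl⟩ hj hlast
  exact h.2.not_ge (le_lastIdx hjC)

end WaitsIn

end PathDecompositions

section Bottlenecks

variable {G : SimpleGraph V} {k l : ℕ} {X : ℕ → Set V} {C D S S' : Set V} {i j : ℕ}

lemma IsPathDecomp.exists_isInBranch [Finite V] (hP : IsPathDecomp G l X)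
    (hS : IsBottleneck G k S) (hw : pdWidth l X < k) : ∃ C, IsInBranch G l X S C := by
  obtain ⟨u, hu, v, hv, hwindow⟩ := hP.exists_forall_mem_Icc_subset_bag S.toFinite hS.1
  set a := firstIdx l X {u}
  set b := lastIdx l X {v}
  have ha : a < l := (hP.firstIdx_mem_supp (Set.singleton_nonempty u)).1
  have hb : b < l := (hP.lastIdx_mem_supp (Set.singleton_nonempty v)).1
  have hcard : (X a ∪ X b).ncard < {C | IsBranch G S C}.ncard := by
    have hunion := Set.ncard_union_le (X a) (X b)
    have hXa := ncard_bag_le_pdWidth_add_one X ha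
    have hXb := ncard_bag_le_pdWidth_add_one X hb
    have hbranches := hS.2
    omega
  obtain ⟨C, hC, hdisj⟩ := exists_disjoint_of_ncard_lt (pairwiseDisjoint_setOf_isBranch G S)
    (Set.toFinite _) hcard
  obtain ⟨hCa, hCb⟩ := Set.disjoint_union_right.1 hdisj
  have hle_first : a ≤ firstIdx l X C :=
    hP.firstIdx_singleton_le_firstIdx hC.1.connected (hC.2.symm ▸ hu) hCa
  have hlast_le : lastIdx l X C ≤ b :=
    hP.lastIdx_le_lastIdx_singleton hC.1.connected (hC.2.symm ▸ hv) hCb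
  have hfirst_le_last : firstIdx l X C ≤ lastIdx l X C :=
    firstIdx_le (hP.lastIdx_mem_supp hC.1.nonempty)
  exact ⟨C, hC, hwindow _ ⟨hle_first, hfirst_le_last.trans hlast_le⟩,
    hwindow _ ⟨hle_first.trans hfirst_le_last, hlast_le⟩⟩

lemma exists_firstIdx_eq_botStart (hS : ∃ C, IsInBranch G l X S C) :
    ∃ C, IsInBranch G l X S C ∧ botStart G l X S = firstIdx l X C := by
  obtain ⟨C, hC⟩ := hS
  exact Nat.sInf_mem (s := {i | ∃ C, IsInBranch G l X S C ∧ i = firstIdx l X C}) ⟨_, C, hC, rfl⟩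

namespace IsPathDecomp

lemma bddAbove_lastIdx_isInBranch (hP : IsPathDecomp G l X) (S : Set V) :
    BddAbove {i | ∃ C, IsInBranch G l X S C ∧ i = lastIdx l X C} := by
  refine ⟨l, ?_⟩
  rintro _ ⟨C, hC, rfl⟩
  exact (hP.lastIdx_mem_supp hC.1.1.nonempty).1.le

lemma exists_lastIdx_eq_botEnd (hP : IsPathDecomp G l X) (hS : ∃ C, IsInBranch G l X S C) :
    ∃ C, IsInBranch G l X S C ∧ botEnd G l X S = lastIdx l X C := by
  obtain ⟨C, hC⟩ := hS
  exact Nat.sSup_mem (s := {i | ∃ C, IsInBranch G l X S C ∧ i = lastIdx l X C}) ⟨_, C, hC, rfl⟩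
    (hP.bddAbove_lastIdx_isInBranch S)

lemma botEnd_lt (hP : IsPathDecomp G l X) (hS : ∃ C, IsInBranch G l X S C) :
    botEnd G l X S < l := by
  obtain ⟨C, hC, hend⟩ := hP.exists_lastIdx_eq_botEnd hS
  exact hend ▸ (hP.lastIdx_mem_supp hC.1.1.nonempty).1

lemma Icc_subset_botInterval (hP : IsPathDecomp G l X) (hC : IsInBranch G l X S C) :
    Set.Icc (firstIdx l X C) (lastIdx l X C) ⊆ botInterval G l X S :=
  Set.Icc_subset_Icc (Nat.sInf_le ⟨C, hC, rfl⟩)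
    (le_csSup (hP.bddAbove_lastIdx_isInBranch S) ⟨C, hC, rfl⟩)

lemma botInterval_subset_Icc (hP : IsPathDecomp G l X) (hS : ∃ C, IsInBranch G l X S C)
    (hD : ∀ C, IsInBranch G l X S C → C ⊆ D) :
    botInterval G l X S ⊆ Set.Icc (firstIdx l X D) (lastIdx l X D) := by
  obtain ⟨A, hA, hstart⟩ := exists_firstIdx_eq_botStart hS
  obtain ⟨B, hB, hend⟩ := hP.exists_lastIdx_eq_botEnd hS
  rw [botInterval, hstart, hend]
  exact Set.Icc_subset_Icc
    (firstIdx_le (supp_mono (hD A hA) (hP.firstIdx_mem_supp hA.1.1.nonempty)))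
    (le_lastIdx (supp_mono (hD B hB) (hP.lastIdx_mem_supp hB.1.1.nonempty)))

lemma botInterval_inter_Icc_eq_empty_or_subset (hP : IsPathDecomp G l X)
    (hS : ∃ C, IsInBranch G l X S C) (hj : j < l)
    (hwait : ∀ C, IsInBranch G l X S C → WaitsIn X C i j) :
    botInterval G l X S ∩ Set.Icc i j = ∅ ∨ Set.Icc i j ⊆ botInterval G l X S := by
  obtain ⟨A, hA, hstart⟩ := exists_firstIdx_eq_botStart hS
  obtain ⟨B, hB, hend⟩ := hP.exists_lastIdx_eq_botEnd hS
  rw [botInterval, hstart, hend, ← Set.disjoint_iff_inter_eq_empty]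
  rcases (hwait A hA).firstIdx_le_or_lt (hP.supp_nonempty hA.1.1.nonempty) with hfirst | hfirst
  · rcases (hwait B hB).lastIdx_lt_or_le hj (hP.supp_nonempty hB.1.1.nonempty) with hlast | hlast
    · exact .inl (Set.disjoint_left.2 fun t ht ht' => (ht.2.trans_lt hlast).not_ge ht'.1)
    · exact .inr (Set.Icc_subset_Icc hfirst hlast)
  · exact .inl (Set.disjoint_left.2 fun t ht ht' => (ht'.2.trans_lt hfirst).not_ge ht.1)

end IsPathDecomp

lemma IsStructured.waitsIn_of_disjoint (hS' : IsStructured G l X S') (hSS' : S ⊂ S')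
    (hC : IsBranch G S C) (hdisj : Disjoint C S') :
    WaitsIn X C (botStart G l X S') (botEnd G l X S') := by
  have hcomp : IsCompOf G S' C :=
    hC.1.of_subset hdisj.subset_compl_right (Set.compl_subset_compl.2 hSS'.subset)
  exact hS' C (.inl ⟨hcomp, fun hC' => hSS'.ne (hC.2.symm.trans hC'.2)⟩)

theorem stmt11_general (hP : IsPathDecomp G l X) (hS : ∃ C, IsInBranch G l X S C)
    (hS' : ∃ C, IsInBranch G l X S' C) (hSS' : S ⊂ S') (hstr : IsStructured G l X S') :
    botInterval G l X S ∩ botInterval G l X S' = ∅ ∨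
    botInterval G l X S' ⊆ botInterval G l X S := by
  by_cases hmeet : ∃ H, IsInBranch G l X S H ∧ (H ∩ S').Nonempty
  · obtain ⟨H, hH, hHS'⟩ := hmeet
    exact .inr ((hP.botInterval_subset_Icc hS' fun C hC =>
      hC.1.subset_isCompOf hH.1.1 hSS'.subset hHS').trans (hP.Icc_subset_botInterval hH))
  · refine hP.botInterval_inter_Icc_eq_empty_or_subset hS (hP.botEnd_lt hS') fun C hC =>
      hstr.waitsIn_of_disjoint hSS' hC.1 ?_
    by_contra hCS'
    exact hmeet ⟨C, hC, Set.not_disjoint_iff_nonempty_inter.1 hCS'⟩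

end Bottlenecks

/-- if an `I`-connected path decomposition of width at most `k-1`
is `S'`-structured and `S ⊊ S'`, then `I(S) ∩ I(S') = ∅` or `I(S') ⊆ I(S)`. -/
theorem stmt11 [Fintype V] (k : ℕ) (hk : 1 ≤ k) (G : SimpleGraph V) (I : Set V)
    (l : ℕ) (X : ℕ → Set V) (hP : IsPathDecomp G l X) (hIc : IsIConn G l X I)
    (hw : pdWidth l X ≤ k - 1)
    (S S' : Set V) (hS : IsBottleneck G k S) (hS' : IsBottleneck G k S')
    (hss : S ⊂ S') (hstr : IsStructured G l X S') :
    botInterval G l X S ∩ botInterval G l X S' = ∅ ∨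
    botInterval G l X S' ⊆ botInterval G l X S := by
  have hw' : pdWidth l X < k := by omega
  exact stmt11_general hP (hP.exists_isInBranch hS hw') (hP.exists_isInBranch hS' hw') hss hstr
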